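/- arXiv:2506.06223 — 8 statements merged into one kernel-verified Lean document; each statement's English description precedes it below -/
import Mathlib

section
/- Let m ≥ 1 be a natural number and let s, t, k, l be real numbers with 0 < s < 1, 0 ≤ t, s + t < 1, 0 ≤ k ≤ 1 and 0 ≤ l. Let p_1, …, p_{m+1} be real numbers such that p_i ≥ t·p_1 + s·p_{i+1} for every i = 1, …, m, and p_{m+1} ≥ k·p_1 + l. Then p_1 ≥ (1−s)·s^m·l / (1 − (s+t) + k·s^{m+1} + t·s^m − k·s^m). -/
/-- Algebraic core of the 'Lower Bound of Sink Reachability' lemma (Lemma A.1):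
given the recurrences `p i ≥ t * p 1 + s * p (i+1)` for `i = 1, …, m` and
`p (m+1) ≥ k * p 1 + l`, we obtain the stated lower bound on `p 1`. -/
theorem stmt_0 (m : ℕ) (hm : 1 ≤ m) (s t k l : ℝ)
    (hs : 0 < s) (hs1 : s < 1) (ht : 0 ≤ t) (hst : s + t < 1)
    (hk : 0 ≤ k) (hk1 : k ≤ 1) (hl : 0 ≤ l)
    (p : ℕ → ℝ)
    (hrec : ∀ i, 1 ≤ i → i ≤ m → p i ≥ t * p 1 + s * p (i + 1))
    (hfront : p (m + 1) ≥ k * p 1 + l) :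
    p 1 ≥ (1 - s) * s ^ m * l /
      (1 - (s + t) + k * s ^ (m + 1) + t * s ^ m - k * s ^ m) := by
  have key : ∀ j, j ≤ m →
      t * p 1 * (1 - s ^ j) + (1 - s) * s ^ j * p (j + 1) ≤ (1 - s) * p 1 := by
    intro j
    induction j with
    | zero => intro _; simp
    | succ j ih =>
      intro hj
      have h1 := ih (by omega)
      have h2 := hrec (j + 1) (by omega) hj
      have h3 : 0 ≤ (1 - s) * s ^ j := mul_nonneg (by linarith) (by positivity)
      have h4 := mul_le_mul_of_nonneg_left h2 h3
      rw [pow_succ]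
      linarith
  have h1 := key m le_rfl
  have h3 : 0 ≤ (1 - s) * s ^ m := mul_nonneg (by linarith) (by positivity)
  have h4 := mul_le_mul_of_nonneg_left hfront h3
  have hp : s ^ m < 1 := pow_lt_one₀ hs.le hs1 (by omega)
  have h5 : 0 < (1 - s - t) * (1 - s ^ m) := mul_pos (by linarith) (by linarith)
  have h6 : 0 ≤ (1 - k) * ((1 - s) * s ^ m) := mul_nonneg (by linarith) h3
  have hD : 0 < 1 - (s + t) + k * s ^ (m + 1) + t * s ^ m - k * s ^ m := by
    rw [pow_succ]
    linarith
  rw [ge_iff_le, div_le_iff₀ hD, pow_succ]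
  linarith
end

section
/- Let n ≥ 1 be a natural number and let δ, α be real numbers with 0 < δ ≤ 1/2 and 0 < α < 1. Set x₀ = δ(1−α) and x₁ = (1−δ)(1−α). Then (1−x₀)·x₀ⁿ / ((1−x₀) − (1−x₀ⁿ)·x₁) > δⁿ·(1−α)^{n+1} / (2α + δⁿ·(1−α)^{n+1}). -/
/-- Corollary A.2 ('Another Lower Bound of crossPath Probability'):
with `x₀ = δ(1-α)` and `x₁ = (1-δ)(1-α)`,
`(1-x₀)·x₀ⁿ / ((1-x₀) - (1-x₀ⁿ)·x₁) > δⁿ·(1-α)^(n+1) / (2α + δⁿ·(1-α)^(n+1))`. -/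
theorem stmt_3 (n : ℕ) (hn : 1 ≤ n) (δ α x₀ x₁ : ℝ)
    (hδ : 0 < δ) (hδ' : δ ≤ 1 / 2) (hα : 0 < α) (hα' : α < 1)
    (hx₀ : x₀ = δ * (1 - α)) (hx₁ : x₁ = (1 - δ) * (1 - α)) :
    (1 - x₀) * x₀ ^ n / ((1 - x₀) - (1 - x₀ ^ n) * x₁) >
      δ ^ n * (1 - α) ^ (n + 1) / (2 * α + δ ^ n * (1 - α) ^ (n + 1)) := by
  have hb : 0 < 1 - α := by linarith
  have e : δ ^ n * (1 - α) ^ (n + 1) = x₀ ^ n * (1 - α) := by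
    rw [hx₀, mul_pow]; ring
  have h0 : 0 < x₀ := by rw [hx₀]; positivity
  have h1 : 0 < x₁ := by
    rw [hx₁]; exact mul_pos (by linarith) hb
  have hp : 0 < x₀ ^ n := pow_pos h0 n
  rw [e]
  generalize x₀ ^ n = p at *
  have hd : (1 - x₀) - (1 - p) * x₁ = α + p * x₁ := by
    rw [hx₀, hx₁]; ring
  have h2 : 2 * x₀ ≤ 1 - α := by rw [hx₀]; nlinarith
  have hpb : 0 < p * (1 - α) := mul_pos hp hb
  have hpx : 0 < p * x₁ := mul_pos hp h1
  rw [hd, gt_iff_lt, div_lt_div_iff₀ (by linarith) (by linarith)]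
  have key : 0 < p * (α * (2 - 2 * x₀ - (1 - α) + p * (1 - α))) :=
    mul_pos hp (mul_pos hα (by linarith))
  have id : (1 - x₀) * p * (2 * α + p * (1 - α)) - p * (1 - α) * (α + p * x₁)
      = p * (α * (2 - 2 * x₀ - (1 - α) + p * (1 - α))) := by
    rw [hx₀, hx₁]; ring
  linarith
end

section
/- Let n ≥ 1 and M ≥ 1 be natural numbers, let δ be a real number with 0 < δ ≤ 1/2, and set ε = 1/((n!)²·M^{2n²}). If α is a real number with 0 < α ≤ δⁿ / (8·(n!)²·M^{2n²}), then 8α / (2α + δⁿ·(1−α)^{n+1}) ≤ ε. -/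
/-- Key inequality in the proof of part 1 of Lemma 4.2: if
`0 < α ≤ δⁿ / (8·(n!)²·M^(2n²))`, then
`8α / (2α + δⁿ·(1-α)^(n+1)) ≤ ε` where `ε = 1/((n!)²·M^(2n²))`. -/
theorem stmt_4 (n M : ℕ) (hn : 1 ≤ n) (hM : 1 ≤ M) (δ : ℝ)
    (hδ : 0 < δ) (hδ' : δ ≤ 1 / 2) (α : ℝ) (hα : 0 < α)
    (hα' : α ≤ δ ^ n / (8 * (n.factorial : ℝ) ^ 2 * (M : ℝ) ^ (2 * n ^ 2))) :
    8 * α / (2 * α + δ ^ n * (1 - α) ^ (n + 1)) ≤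
      1 / ((n.factorial : ℝ) ^ 2 * (M : ℝ) ^ (2 * n ^ 2)) := by
  have hKpos : 0 < (n.factorial : ℝ) ^ 2 * (M : ℝ) ^ (2 * n ^ 2) := by
    have h1 : (0 : ℝ) < n.factorial := by exact_mod_cast n.factorial_pos
    have h2 : (0 : ℝ) < M := by exact_mod_cast hM
    positivity
  rw [mul_assoc] at hα'
  have hK1 : 1 ≤ (n.factorial : ℝ) ^ 2 * (M : ℝ) ^ (2 * n ^ 2) := by
    have h1 : (1 : ℝ) ≤ n.factorial := by exact_mod_cast n.factorial_pos
    have h2 : (1 : ℝ) ≤ M := by exact_mod_cast hM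
    exact one_le_mul_of_one_le_of_one_le (one_le_pow₀ h1) (one_le_pow₀ h2)
  generalize (n.factorial : ℝ) ^ 2 * (M : ℝ) ^ (2 * n ^ 2) = K at *
  rw [le_div_iff₀ (by positivity)] at hα'
  have hD : 0 < δ ^ n := pow_pos hδ n
  have hDn : δ ^ n * (n + 1) ≤ 1 := by
    have h1 : δ ^ n ≤ (1 / 2) ^ n := pow_le_pow_left₀ hδ.le hδ' n
    have h2 : ((n : ℝ) + 1) ≤ 2 ^ n := by exact_mod_cast Nat.lt_two_pow_self (n := n)
    calc δ ^ n * (n + 1) ≤ (1 / 2) ^ n * 2 ^ n := by gcongr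
      _ = 1 := by rw [← mul_pow]; norm_num
  have hD1 : δ ^ n ≤ 1 := pow_le_one₀ hδ.le (by linarith)
  have hα1 : α ≤ 1 := by nlinarith
  have hB : 1 - (n + 1) * α ≤ (1 - α) ^ (n + 1) := by
    have := one_add_mul_le_pow (a := -α) (by linarith) (n + 1)
    push_cast at this
    rw [← sub_eq_add_neg] at this
    linarith
  have h3 := mul_le_mul_of_nonneg_left hB hD.le
  have h4 := mul_le_mul_of_nonneg_right hDn hα.le
  have h5 : 0 ≤ (1 - α) ^ (n + 1) := pow_nonneg (by linarith) _
  rw [div_le_div_iff₀ (by positivity) hKpos]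
  nlinarith
end

section
/- Let n ≥ 1 and M ≥ 1 be natural numbers, let δ be a real number with 0 < δ ≤ 1/2, set ε = 1/((n!)²·M^{2n²}), and let α be a real number with 0 < α ≤ δⁿ / (8·(n!)²·M^{2n²}). Set x₀ = δ(1−α) and x₁ = (1−δ)(1−α). Then (1−x₀)·x₀ⁿ / ((1−x₀) − (1−x₀ⁿ)·x₁) > (4−ε)/4. -/
/-- Part 1 of Lemma 4.2 combined with Lemma 3.1: with `x₀ = δ(1-α)` and
`x₁ = (1-δ)(1-α)`, if `0 < α ≤ δⁿ/(8(n!)²M^(2n²))`, then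
`(1-x₀)·x₀ⁿ / ((1-x₀) - (1-x₀ⁿ)·x₁) > (4-ε)/4` where `ε = 1/((n!)²·M^(2n²))`. -/
theorem stmt_5 (n M : ℕ) (hn : 1 ≤ n) (hM : 1 ≤ M) (δ : ℝ)
    (hδ : 0 < δ) (hδ' : δ ≤ 1 / 2) (α : ℝ) (hα : 0 < α)
    (hα' : α ≤ δ ^ n / (8 * (n.factorial : ℝ) ^ 2 * (M : ℝ) ^ (2 * n ^ 2)))
    (x₀ x₁ : ℝ) (hx₀ : x₀ = δ * (1 - α)) (hx₁ : x₁ = (1 - δ) * (1 - α)) :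
    (1 - x₀) * x₀ ^ n / ((1 - x₀) - (1 - x₀ ^ n) * x₁) >
      (4 - 1 / ((n.factorial : ℝ) ^ 2 * (M : ℝ) ^ (2 * n ^ 2))) / 4 := by
  have hF : (1:ℝ) ≤ (n.factorial : ℝ) ^ 2 * (M : ℝ) ^ (2 * n ^ 2) := by
    have : 1 ≤ n.factorial ^ 2 * M ^ (2 * n ^ 2) := Nat.succ_le_of_lt (by positivity)
    exact_mod_cast this
  rw [mul_assoc] at hα'
  generalize (n.factorial : ℝ) ^ 2 * (M : ℝ) ^ (2 * n ^ 2) = F at *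
  have hF0 : 0 < F := by linarith
  have hd0 : 0 < δ ^ n := by positivity
  have hd1 : δ ^ n ≤ 1 := pow_le_one₀ hδ.le (by linarith)
  rw [le_div_iff₀ (by positivity)] at hα'
  have hα1 : α ≤ 1 / 8 := by nlinarith
  have hbern : 1 - ((n:ℝ) + 1) * α ≤ (1 - α) ^ (n + 1) := by
    have h := one_add_mul_le_pow (a := -α) (by linarith) (n + 1)
    push_cast at h
    rw [← sub_eq_add_neg] at h
    linarith
  have hdn : δ ^ n * ((n:ℝ) + 1) ≤ 2 := by
    have h1 : δ ^ n ≤ (1 / 2) ^ n := pow_le_pow_left₀ hδ.le hδ' n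
    have h2 : ((n:ℝ) + 1) ≤ 2 ^ n := by
      have : n + 1 ≤ 2 ^ n := Nat.lt_two_pow_self
      exact_mod_cast this
    have h3 : δ ^ n * ((n:ℝ) + 1) ≤ (1 / 2) ^ n * 2 ^ n := by gcongr
    rw [← mul_pow] at h3
    norm_num at h3
    linarith
  have hy : x₀ ^ n * x₁ = δ ^ n * (1 - α) ^ (n + 1) * (1 - δ) := by
    rw [hx₀, hx₁, mul_pow, pow_succ]; ring
  have hy0 : 0 < x₀ ^ n := by
    rw [hx₀]; exact pow_pos (mul_pos hδ (by linarith)) n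
  have hq0 : 0 < (1 - α) ^ (n + 1) := pow_pos (by linarith) _
  have key : δ ^ n / 2 ≤ α + x₀ ^ n * x₁ := by
    rw [hy]
    have h1 : δ ^ n * (1 - α) ^ (n + 1) * (1 / 2) ≤ δ ^ n * (1 - α) ^ (n + 1) * (1 - δ) :=
      mul_le_mul_of_nonneg_left (by linarith) (by positivity)
    have h2 := mul_le_mul_of_nonneg_left hbern hd0.le
    have h3 := mul_le_mul_of_nonneg_right hdn hα.le
    nlinarith
  have hs : 1 - x₀ = x₁ + α := by rw [hx₀, hx₁]; ring
  generalize x₀ ^ n = y at *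
  have hden : (1 - x₀) - (1 - y) * x₁ = α + y * x₁ := by rw [hs]; ring
  have hD : 0 < α + y * x₁ := by linarith
  rw [hden, hs, gt_iff_lt, lt_div_iff₀ hD]
  have e : (4 - 1 / F) / 4 * (α + y * x₁) = (α + y * x₁) - (α + y * x₁) / (4 * F) := by
    field_simp
  rw [e]
  have hfin : α * (1 - y) < (α + y * x₁) / (4 * F) := by
    rw [lt_div_iff₀ (by positivity)]
    have : 0 < α * y * F := by positivity
    nlinarith
  nlinarith
end

section
/- Let n ≥ 1 be a natural number and let δ, α, β be real numbers with 0 < δ ≤ 1/2 and 0 < β < α < 1. Set x₂ = δ(1−β), x₃ = (1−δ)(1−β), x₄ = δα and x₅ = δ(1−α) + (1−δ)(1−β). Then (1−β) · (1−x₂)·x₂^{n−1}·x₄ / (1 − (x₂+x₃) + x₅·x₂ⁿ + x₃·x₂^{n−1} − x₅·x₂^{n−1}) > (δⁿ·(1−δ) − β/α) / (δⁿ·(1−δ) + β/α). -/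
set_option maxHeartbeats 2000000 in
/-- Corollary A.4 ('Another Lower Bound of winEven Probability'): with
`x₂ = δ(1-β)`, `x₃ = (1-δ)(1-β)`, `x₄ = δα`, `x₅ = δ(1-α) + (1-δ)(1-β)`,
the left-hand side of Lemma 3.2 is bounded from below by
`(δⁿ(1-δ) - β/α) / (δⁿ(1-δ) + β/α)`. -/
theorem stmt_6 (n : ℕ) (hn : 1 ≤ n) (δ α β x₂ x₃ x₄ x₅ : ℝ)
    (hδ : 0 < δ) (hδ' : δ ≤ 1 / 2)
    (hβ : 0 < β) (hβα : β < α) (hα1 : α < 1)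
    (hx₂ : x₂ = δ * (1 - β)) (hx₃ : x₃ = (1 - δ) * (1 - β))
    (hx₄ : x₄ = δ * α) (hx₅ : x₅ = δ * (1 - α) + (1 - δ) * (1 - β)) :
    (1 - β) * ((1 - x₂) * x₂ ^ (n - 1) * x₄) /
        (1 - (x₂ + x₃) + x₅ * x₂ ^ n + x₃ * x₂ ^ (n - 1) - x₅ * x₂ ^ (n - 1)) >
      (δ ^ n * (1 - δ) - β / α) / (δ ^ n * (1 - δ) + β / α) := by
  obtain ⟨m, rfl⟩ : ∃ m, n = m + 1 := ⟨n - 1, by omega⟩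
  have hα : 0 < α := hβ.trans hβα
  have hβ1 : β < 1 := hβα.trans hα1
  simp only [Nat.add_sub_cancel]
  have hx2pos : 0 < x₂ := by rw [hx₂]; exact mul_pos hδ (by linarith)
  have hx2le : x₂ ≤ δ := by rw [hx₂]; nlinarith
  obtain ⟨p, hp⟩ : ∃ p, p = x₂ ^ m := ⟨_, rfl⟩
  have hp0 : 0 < p := by rw [hp]; positivity
  have hp1 : p ≤ 1 := by rw [hp]; exact pow_le_one₀ hx2pos.le (by linarith)
  obtain ⟨c, hc⟩ : ∃ c, c = δ ^ (m + 1) * (1 - δ) := ⟨_, rfl⟩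
  have hc0 : 0 < c := by rw [hc]; exact mul_pos (by positivity) (by linarith)
  have hD : 1 - (x₂ + x₃) + x₅ * x₂ ^ (m + 1) + x₃ * x₂ ^ m - x₅ * x₂ ^ m
      = β * (1 - p * x₂) + p * δ * (α - β) * (1 - x₂) := by
    rw [pow_succ, ← hp, hx₃, hx₅, hx₂]; ring
  rw [hD, ← hp, ← hc, hx₄]
  have hq1 : p * x₂ ≤ 1 / 2 := by nlinarith
  have hq0 : 0 < p * x₂ := by positivity
  have h1x : 1 - δ ≤ 1 - x₂ := by linarith
  have h1x0 : 0 < 1 - x₂ := by linarith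
  have hDpos : 0 < β * (1 - p * x₂) + p * δ * (α - β) * (1 - x₂) := by
    have h1 : 0 < β * (1 - p * x₂) := mul_pos hβ (by linarith)
    have h2 : 0 < p * δ * (α - β) * (1 - x₂) :=
      mul_pos (mul_pos (by positivity) (by linarith)) h1x0
    linarith
  have hN : 0 < (1 - β) * ((1 - x₂) * p * (δ * α)) :=
    mul_pos (by linarith) (by positivity)
  have hR : (c - β / α) / (c + β / α) = (c * α - β) / (c * α + β) := by
    field_simp
  rw [hR, gt_iff_lt]
  rcases le_or_gt (c * α) β with h | h
  · exact lt_of_le_of_lt (div_nonpos_of_nonpos_of_nonneg (by linarith) (by positivity))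
      (div_pos hN hDpos)
  have hδm : δ ^ m ≤ 1 := pow_le_one₀ hδ.le (by linarith)
  have hδm0 : 0 < δ ^ m := by positivity
  have hc4 : c ≤ 1 / 4 := by
    have : c = δ ^ m * (δ * (1 - δ)) := by rw [hc]; ring
    have h2 : δ * (1 - δ) ≤ 1 / 4 := by nlinarith [sq_nonneg (δ - 1 / 2)]
    have h3 : 0 < δ * (1 - δ) := mul_pos hδ (by linarith)
    rw [this]; nlinarith
  have hcα : c * α ≤ 1 / 4 * α := mul_le_mul_of_nonneg_right hc4 hα.le
  have hm : (m : ℝ) * δ ^ m ≤ 1 / 2 := by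
    have h1 : (2 * m : ℝ) ≤ 2 ^ m := by
      rcases m with _ | k
      · simp
      · have : k < 2 ^ k := Nat.lt_two_pow_self
        have : 2 * (k + 1) ≤ 2 ^ (k + 1) := by rw [pow_succ]; omega
        exact_mod_cast this
    have h2 : δ ^ m ≤ (1 / 2) ^ m := pow_le_pow_left₀ hδ.le hδ' m
    have h3 : (2 : ℝ) ^ m * (1 / 2) ^ m = 1 := by rw [← mul_pow]; norm_num
    have h4 : (0 : ℝ) < (1 / 2) ^ m := by positivity
    have h5 : (m : ℝ) * δ ^ m ≤ m * (1 / 2) ^ m := by gcongr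
    nlinarith
  have hmβ : (m : ℝ) * β ≤ 1 / 4 := by
    have h1 : β ≤ δ ^ m * (1 / 2) := by
      have : c ≤ δ ^ m * (1 / 2) := by
        have : c = δ ^ m * (δ * (1 - δ)) := by rw [hc]; ring
        rw [this]
        exact mul_le_mul_of_nonneg_left (by nlinarith) hδm0.le
      have h0 : c * α ≤ c := mul_le_of_le_one_right hc0.le hα1.le
      linarith
    have h2 : (m : ℝ) * β ≤ m * (δ ^ m * (1 / 2)) := by gcongr
    linarith
  have hB : 3 / 4 ≤ (1 - β) ^ m := by
    have := one_add_mul_le_pow (a := -β) (by linarith) m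
    rw [← sub_eq_add_neg 1 β] at this
    linarith
  have hr : 3 / 4 * c ≤ p * δ * (1 - x₂) := by
    have e1 : p * δ = (1 - β) ^ m * δ ^ (m + 1) := by rw [hp, hx₂, mul_pow]; ring
    have h1 : 3 / 4 * δ ^ (m + 1) ≤ p * δ := by rw [e1]; gcongr
    rw [hc, ← mul_assoc]
    exact mul_le_mul h1 h1x (by linarith) (by positivity)
  rw [div_lt_div_iff₀ (by positivity) hDpos]
  obtain ⟨s, hs⟩ : ∃ s, s = p * δ * (1 - x₂) := ⟨_, rfl⟩
  rw [← hs] at hr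
  have key : 0 < c * α * (s * (1 - α) - (1 - p * x₂))
      + s * (α * (1 - β) + α - β) + β * (1 - p * x₂) := by
    have h1 : 3 / 2 * α ≤ α * (1 - β) + α - β := by
      have h0 : α * β ≤ β := mul_le_of_le_one_left hβ.le hα1.le
      linarith
    have h2 : (3 / 4 * c) * (3 / 2 * α) ≤ s * (α * (1 - β) + α - β) :=
      mul_le_mul hr h1 (by positivity) (by linarith)
    have h3 : 0 < c * α := by positivity
    have h4 : 0 ≤ c * α * (s * (1 - α)) :=
      mul_nonneg h3.le (mul_nonneg (by linarith) (by linarith))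
    have h5 : 0 < c * α * (p * x₂) := by positivity
    have h6 : 0 < β * (1 - p * x₂) := mul_pos hβ (by linarith)
    linarith
  have hk := mul_pos hβ key
  rw [hs] at hk
  refine sub_pos.mp (lt_of_lt_of_eq hk ?_)
  ring
end

section
/- Let n ≥ 1 and M ≥ 1 be natural numbers, let δ, α, β be real numbers with 0 < δ ≤ 1/2, 0 < β < α < 1 and β/α ≤ δⁿ·(1−δ) / (8·(n!)²·M^{2n²} + 1), and set ε = 1/((n!)²·M^{2n²}). Set x₂ = δ(1−β), x₃ = (1−δ)(1−β), x₄ = δα and x₅ = δ(1−α) + (1−δ)(1−β). Then (1−β) · (1−x₂)·x₂^{n−1}·x₄ / (1 − (x₂+x₃) + x₅·x₂ⁿ + x₃·x₂^{n−1} − x₅·x₂^{n−1}) > 4/(4+ε). -/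
/-- Part 2 of Lemma 4.2 combined with Lemma 3.2: with
`x₂ = δ(1-β)`, `x₃ = (1-δ)(1-β)`, `x₄ = δα`, `x₅ = δ(1-α) + (1-δ)(1-β)`, and
`β/α ≤ δⁿ(1-δ)/(8(n!)²M^(2n²)+1)`, the winEven lower bound exceeds `4/(4+ε)`
where `ε = 1/((n!)²·M^(2n²))`. -/
theorem stmt_8 (n M : ℕ) (hn : 1 ≤ n) (hM : 1 ≤ M) (δ α β : ℝ)
    (hδ : 0 < δ) (hδ' : δ ≤ 1 / 2)
    (hβ : 0 < β) (hβα : β < α) (hα1 : α < 1)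
    (hratio : β / α ≤ δ ^ n * (1 - δ) /
      (8 * (n.factorial : ℝ) ^ 2 * (M : ℝ) ^ (2 * n ^ 2) + 1))
    (x₂ x₃ x₄ x₅ : ℝ)
    (hx₂ : x₂ = δ * (1 - β)) (hx₃ : x₃ = (1 - δ) * (1 - β))
    (hx₄ : x₄ = δ * α) (hx₅ : x₅ = δ * (1 - α) + (1 - δ) * (1 - β)) :
    (1 - β) * ((1 - x₂) * x₂ ^ (n - 1) * x₄) /
        (1 - (x₂ + x₃) + x₅ * x₂ ^ n + x₃ * x₂ ^ (n - 1) - x₅ * x₂ ^ (n - 1)) >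
      4 / (4 + 1 / ((n.factorial : ℝ) ^ 2 * (M : ℝ) ^ (2 * n ^ 2))) := by
  obtain ⟨m, rfl⟩ : ∃ m, n = m + 1 := ⟨n - 1, by omega⟩
  have hKm : (m : ℝ) + 1 ≤ ((m + 1).factorial : ℝ) ^ 2 * (M : ℝ) ^ (2 * (m + 1) ^ 2) := by
    have h1 : m + 1 ≤ (m + 1).factorial := Nat.self_le_factorial _
    have h2 : 1 ≤ M ^ (2 * (m + 1) ^ 2) := Nat.one_le_pow _ _ hM
    have h3 : m + 1 ≤ (m + 1).factorial ^ 2 * M ^ (2 * (m + 1) ^ 2) := by nlinarith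
    exact_mod_cast h3
  rw [mul_assoc 8] at hratio
  generalize ((m + 1).factorial : ℝ) ^ 2 * (M : ℝ) ^ (2 * (m + 1) ^ 2) = K at *
  have hm0 : (0 : ℝ) ≤ m := Nat.cast_nonneg m
  have hK : 1 ≤ K := by linarith
  have hα : 0 < α := hβ.trans hβα
  have hβ1 : β < 1 := hβα.trans hα1
  rw [div_le_div_iff₀ hα (by linarith)] at hratio
  have hdm : δ ^ m ≤ 1 := pow_le_one₀ hδ.le (by linarith)
  have hdm0 : 0 < δ ^ m := pow_pos hδ m
  have hq : δ * (1 - δ) ≤ 1 / 4 := by nlinarith [sq_nonneg (δ - 1 / 2)]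
  have hq0 : 0 < δ * (1 - δ) := mul_pos hδ (by linarith)
  have hb : β * (8 * K + 1) ≤ 1 / 4 := by
    have h1 : δ ^ (m + 1) * (1 - δ) ≤ 1 / 4 := by
      rw [pow_succ]; nlinarith
    have h0 : 0 < δ ^ (m + 1) * (1 - δ) := mul_pos (pow_pos hδ _) (by linarith)
    nlinarith
  have hu : 1 - m * β ≤ (1 - β) ^ m := by
    have := one_add_mul_le_pow (a := -β) (by linarith) m
    rw [← sub_eq_add_neg] at this
    linarith
  have hu1 : (1 - β) ^ m ≤ 1 := pow_le_one₀ (by linarith) (by linarith)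
  have hu2 : 31 / 32 ≤ (1 - β) ^ m := by nlinarith
  have hx2m : x₂ ^ m = δ ^ m * (1 - β) ^ m := by rw [hx₂, mul_pow]
  generalize (1 - β) ^ m = u at *
  simp only [Nat.add_sub_cancel]
  rw [pow_succ x₂, hx2m]
  rw [pow_succ] at hratio
  generalize δ ^ m = d at *
  obtain ⟨c, hc⟩ : ∃ c, c = 2 - δ - β * (1 - δ) := ⟨_, rfl⟩
  have hc0 : 0 < c := by nlinarith
  have hc2 : c < 2 := by nlinarith
  have hp0 : 0 < d * u * δ := by positivity
  have hp1 : d * u * δ ≤ 1 / 2 := by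
    have : d * u ≤ 1 := by nlinarith
    nlinarith
  obtain ⟨A, hA⟩ : ∃ A, A = d * u * δ * α * (1 - δ + δ * β) := ⟨_, rfl⟩
  have hr0 : 0 < 1 - d * u * δ * c := by
    have := mul_le_mul_of_nonneg_right hp1 hc0.le
    linarith
  have hr1 : 1 - d * u * δ * c < 1 := by linarith [mul_pos hp0 hc0]
  have hAβ : u * (β * (8 * K + 1)) ≤ A := by
    have h1 : u * (β * (8 * K + 1)) ≤ u * (d * δ * (1 - δ) * α) :=
      mul_le_mul_of_nonneg_left hratio (by linarith)
    have h2 : 0 < d * u * δ * α * (δ * β) := by positivity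
    rw [hA]; linarith
  have hA0 : 0 < A := lt_of_lt_of_le (by positivity) hAβ
  have hN : (1 - β) * ((1 - x₂) * (d * u) * x₄) = (1 - β) * A := by
    rw [hA, hx₂, hx₄]; ring
  have hD : 1 - (x₂ + x₃) + x₅ * (d * u * x₂) + x₃ * (d * u) - x₅ * (d * u)
      = A + β * (1 - d * u * δ * c) := by
    rw [hA, hc, hx₂, hx₃, hx₅]; ring
  rw [hN, hD]
  generalize 1 - d * u * δ * c = r at *
  have hD0 : 0 < A + β * r := by positivity
  have hR : 4 / (4 + 1 / K) = 4 * K / (4 * K + 1) := by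
    field_simp
  rw [gt_iff_lt, hR, div_lt_div_iff₀ (by linarith) hD0]
  have hbk : 0 < β * K := by positivity
  have h1 : β * (4 * K + 1) ≤ 1 / 4 := by linarith [hb, hbk]
  have h2 : A * (3 / 4) ≤ A * (1 - β * (4 * K + 1)) :=
    mul_le_mul_of_nonneg_left (by linarith) hA0.le
  have h3 : 31 / 32 * (β * (8 * K + 1)) ≤ A :=
    le_trans (mul_le_mul_of_nonneg_right hu2 (by positivity)) hAβ
  have h4 : β * K * r < β * K := mul_lt_of_lt_one_right hbk hr1
  linarith
end

section
/- Let ε > 0 be a real number and set x = (4−ε)/4 and y = 4/(4+ε). Let P, P′ be real numbers with 0 ≤ P ≤ 1 and 0 ≤ P′ ≤ 1, and let W, W′ be real numbers such that W ≤ P + 1 − x·y, W′ ≥ y·P′ − y + x·y, and P′ > P + ε. Then W′ > W. -/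
/-- Arithmetic core of the main reduction theorem (Theorem 4): with
`x = (4-ε)/4` and `y = 4/(4+ε)`, if `W ≤ P + 1 - x·y`,
`W' ≥ y·P' - y + x·y`, and `P' > P + ε`, then `W' > W`. -/
theorem stmt_10 (ε : ℝ) (hε : 0 < ε) (P P' W W' : ℝ)
    (hP0 : 0 ≤ P) (hP1 : P ≤ 1) (hP'0 : 0 ≤ P') (hP'1 : P' ≤ 1)
    (hW : W ≤ P + 1 - (4 - ε) / 4 * (4 / (4 + ε)))
    (hW' : W' ≥ 4 / (4 + ε) * P' - 4 / (4 + ε) + (4 - ε) / 4 * (4 / (4 + ε)))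
    (hPP : P' > P + ε) :
    W' > W := by
  have h4 : 0 < 4 + ε := by linarith
  have hnum : 0 < 4 * (P' - P) - 3 * ε - ε * P := by
    nlinarith [mul_nonneg hε.le (sub_nonneg.mpr hP1)]
  have key : (4 / (4 + ε) * P' - 4 / (4 + ε) + (4 - ε) / 4 * (4 / (4 + ε)))
      - (P + 1 - (4 - ε) / 4 * (4 / (4 + ε)))
      = (4 * (P' - P) - 3 * ε - ε * P) / (4 + ε) := by
    field_simp
    ring
  have hpos := div_pos hnum h4
  linarith
end

section
/- Let n, M be natural numbers with M ≥ 1, and let s, s′ be natural numbers with 1 ≤ s < n and 1 ≤ s′ < n. Let Q be an s×s matrix over ℚ with det Q ≠ 0 and b ∈ ℚ^s, and let Q′ be an s′×s′ matrix over ℚ with det Q′ ≠ 0 and b′ ∈ ℚ^{s′}, such that every entry q of Q, of b, of Q′ and of b′ can be written as q = c/d for some integers c, d with |c| ≤ d and 1 ≤ d ≤ M. Let x = Q⁻¹·b and x′ = Q′⁻¹·b′. Then for all indices i and i′: if x_i ≠ x′_{i′}, then |x_i − x′_{i′}| > 1/((n!)²·M^{2n²}). -/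
theorem aux_sol (n M : ℕ) (hM : 1 ≤ M) (s : ℕ) (hs : 1 ≤ s) (hsn : s < n)
    (Q : Matrix (Fin s) (Fin s) ℚ) (hQ : Q.det ≠ 0) (b : Fin s → ℚ)
    (hQe : ∀ i j, ∃ c d : ℤ, |c| ≤ d ∧ 1 ≤ d ∧ d ≤ (M : ℤ) ∧
      Q i j = (c : ℚ) / (d : ℚ))
    (hbe : ∀ i, ∃ c d : ℤ, |c| ≤ d ∧ 1 ≤ d ∧ d ≤ (M : ℤ) ∧
      b i = (c : ℚ) / (d : ℚ)) (i : Fin s) :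
    ∃ D N : ℤ, D ≠ 0 ∧ |D| < (n.factorial : ℤ) * (M : ℤ) ^ (n ^ 2) ∧
      (D : ℚ) * Q⁻¹.mulVec b i = N := by
  choose c d hcd hd1 hdM hq using hQe
  choose c' d' hcd' hd1' hdM' hb using hbe
  have hM' : (1 : ℤ) ≤ M := by exact_mod_cast hM
  let p : Fin s → ℤ := fun r => (∏ j, d r j) * d' r
  have hppos : ∀ r, 0 < p r := fun r =>
    mul_pos (Finset.prod_pos fun j _ => by linarith [hd1 r j]) (by linarith [hd1' r])
  have hpM : ∀ r, p r ≤ (M : ℤ) ^ (s + 1) := by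
    intro r
    have h1 : ∏ j, d r j ≤ ∏ _j : Fin s, (M : ℤ) :=
      Finset.prod_le_prod (fun j _ => by linarith [hd1 r j]) (fun j _ => hdM r j)
    rw [Finset.prod_const, Finset.card_univ, Fintype.card_fin] at h1
    rw [pow_succ]
    exact mul_le_mul h1 (hdM' r) (by linarith [hd1' r]) (by positivity)
  have hA : ∀ r j, ∃ a : ℤ, (a : ℚ) = p r * Q r j ∧ |a| ≤ (M : ℤ) ^ (s + 1) := by
    intro r j
    have hdvd : d r j ∣ p r := Dvd.dvd.mul_right (Finset.dvd_prod_of_mem _ (Finset.mem_univ j)) _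
    obtain ⟨k, hk⟩ := hdvd
    have hd0 : (0 : ℤ) < d r j := by linarith [hd1 r j]
    have hk0 : 0 < k := by
      have := hppos r
      rw [hk] at this
      exact (mul_pos_iff_of_pos_left hd0).1 this
    refine ⟨c r j * k, ?_, ?_⟩
    · rw [hq, hk]
      have : (d r j : ℚ) ≠ 0 := by exact_mod_cast hd0.ne'
      push_cast
      field_simp
    · rw [abs_mul, abs_of_pos hk0]
      calc |c r j| * k ≤ d r j * k := by
            exact mul_le_mul_of_nonneg_right (hcd r j) hk0.le
        _ = p r := hk.symm
        _ ≤ _ := hpM r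
  have hB : ∀ r, ∃ a : ℤ, (a : ℚ) = p r * b r := by
    intro r
    refine ⟨(∏ j, d r j) * c' r, ?_⟩
    have : (d' r : ℚ) ≠ 0 := by
      have := hd1' r
      exact_mod_cast (by omega : d' r ≠ 0)
    rw [hb]
    simp only [p]
    push_cast
    field_simp
  choose A hAe hAM using hA
  choose B hBe using hB
  let A' : Matrix (Fin s) (Fin s) ℤ := Matrix.of A
  have hmap : A'.map (Int.castRingHom ℚ) = Matrix.diagonal (fun r => (p r : ℚ)) * Q := by
    ext r j
    simp [A', Matrix.diagonal_mul, hAe]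
  have hdet : (A'.det : ℚ) = (∏ r, (p r : ℚ)) * Q.det := by
    have := RingHom.map_det (Int.castRingHom ℚ) A'
    rw [RingHom.mapMatrix_apply, hmap, Matrix.det_mul, Matrix.det_diagonal] at this
    simpa using this
  have hx : Q.mulVec (Q⁻¹.mulVec b) = b := by
    rw [Matrix.mulVec_mulVec, Matrix.mul_nonsing_inv _ (isUnit_iff_ne_zero.2 hQ),
      Matrix.one_mulVec]
  have hAx : (A'.map (Int.castRingHom ℚ)).mulVec (Q⁻¹.mulVec b) = fun r => (B r : ℚ) := by
    rw [hmap, ← Matrix.mulVec_mulVec, hx]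
    ext r
    rw [Matrix.mulVec_diagonal, hBe]
  refine ⟨A'.det, A'.adjugate.mulVec B i, ?_, ?_, ?_⟩
  · intro h
    rw [h] at hdet
    have h2 : (∏ r, (p r : ℚ)) ≠ 0 :=
      Finset.prod_ne_zero_iff.2 fun r _ => by exact_mod_cast (hppos r).ne'
    exact mul_ne_zero h2 hQ (by simpa using hdet.symm)
  · have h1 := Matrix.det_le (A := A') (abv := AbsoluteValue.abs) (x := (M : ℤ) ^ (s + 1))
      (fun r j => hAM r j)
    simp only [Fintype.card_fin, nsmul_eq_mul, AbsoluteValue.abs_apply] at h1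
    have h2 : ((M : ℤ) ^ (s + 1)) ^ s ≤ (M : ℤ) ^ (n ^ 2) := by
      rw [← pow_mul]
      exact pow_le_pow_right₀ hM' (by nlinarith)
    have h3 : (s.factorial : ℤ) < n.factorial := by
      exact_mod_cast (Nat.factorial_lt (by omega)).2 hsn
    calc |A'.det| ≤ _ := h1
      _ ≤ (s.factorial : ℤ) * (M : ℤ) ^ (n ^ 2) :=
        mul_le_mul_of_nonneg_left h2 (by positivity)
      _ < _ := mul_lt_mul_of_pos_right h3 (by positivity)
  · clear hx
    generalize Q⁻¹.mulVec b = x at *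
    have h1 := congrArg (fun v => ((A'.map (Int.castRingHom ℚ)).adjugate).mulVec v i) hAx
    simp only [Matrix.mulVec_mulVec, Matrix.adjugate_mul] at h1
    have h2 : (A'.map (Int.castRingHom ℚ)).det = (A'.det : ℚ) := by
      rw [← RingHom.mapMatrix_apply, ← RingHom.map_det]; simp
    have h3 : (A'.map (Int.castRingHom ℚ)).adjugate = A'.adjugate.map (Int.castRingHom ℚ) := by
      rw [← RingHom.mapMatrix_apply, ← RingHom.map_adjugate]; simp
    rw [h2, h3, Matrix.smul_mulVec, Matrix.one_mulVec] at h1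
    simp only [Pi.smul_apply, smul_eq_mul] at h1
    rw [h1]
    simp [Matrix.mulVec, dotProduct]

/-- Lemma 4.1 ('lower bound on different strategies') in linear-algebra form:
solutions of two nonsingular rational linear systems, all of whose entries are
fractions `c/d` with `|c| ≤ d` and `1 ≤ d ≤ M`, in `s < n` resp. `s' < n`
unknowns, either coincide componentwise or differ by more than
`1/((n!)²·M^(2n²))`. -/
theorem stmt_13 (n M : ℕ) (hM : 1 ≤ M) (s s' : ℕ)
    (hs : 1 ≤ s) (hsn : s < n) (hs' : 1 ≤ s') (hs'n : s' < n)
    (Q : Matrix (Fin s) (Fin s) ℚ) (hQ : Q.det ≠ 0) (b : Fin s → ℚ)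
    (Q' : Matrix (Fin s') (Fin s') ℚ) (hQ' : Q'.det ≠ 0) (b' : Fin s' → ℚ)
    (hQe : ∀ i j, ∃ c d : ℤ, |c| ≤ d ∧ 1 ≤ d ∧ d ≤ (M : ℤ) ∧
      Q i j = (c : ℚ) / (d : ℚ))
    (hbe : ∀ i, ∃ c d : ℤ, |c| ≤ d ∧ 1 ≤ d ∧ d ≤ (M : ℤ) ∧
      b i = (c : ℚ) / (d : ℚ))
    (hQ'e : ∀ i j, ∃ c d : ℤ, |c| ≤ d ∧ 1 ≤ d ∧ d ≤ (M : ℤ) ∧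
      Q' i j = (c : ℚ) / (d : ℚ))
    (hb'e : ∀ i, ∃ c d : ℤ, |c| ≤ d ∧ 1 ≤ d ∧ d ≤ (M : ℤ) ∧
      b' i = (c : ℚ) / (d : ℚ)) :
    ∀ (i : Fin s) (i' : Fin s'),
      Q⁻¹.mulVec b i ≠ Q'⁻¹.mulVec b' i' →
      |Q⁻¹.mulVec b i - Q'⁻¹.mulVec b' i'| >
        1 / ((n.factorial : ℚ) ^ 2 * (M : ℚ) ^ (2 * n ^ 2)) := by
  intro i i' hne
  obtain ⟨D, N, hD, hDM, hDN⟩ := aux_sol n M hM s hs hsn Q hQ b hQe hbe i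
  obtain ⟨D', N', hD', hDM', hDN'⟩ := aux_sol n M hM s' hs' hs'n Q' hQ' b' hQ'e hb'e i'
  generalize Q⁻¹.mulVec b i = x at *
  generalize Q'⁻¹.mulVec b' i' = y at *
  have hDq : (D : ℚ) ≠ 0 := by exact_mod_cast hD
  have hDq' : (D' : ℚ) ≠ 0 := by exact_mod_cast hD'
  have e : (D : ℚ) * D' * (x - y) = ((N * D' - N' * D : ℤ) : ℚ) := by
    push_cast
    rw [← hDN, ← hDN']; ring
  have hz : N * D' - N' * D ≠ 0 := by
    intro h
    rw [h] at e
    exact mul_ne_zero (mul_ne_zero hDq hDq') (sub_ne_zero.2 hne) (by simpa using e)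
  have h1 : (1 : ℚ) ≤ |(D : ℚ)| * |(D' : ℚ)| * |x - y| := by
    rw [← abs_mul, ← abs_mul, e]
    exact_mod_cast Int.one_le_abs hz
  have hpos : 0 < |x - y| := abs_pos.2 (sub_ne_zero.2 hne)
  have a1 : |(D : ℚ)| < (n.factorial : ℚ) * (M : ℚ) ^ (n ^ 2) := by exact_mod_cast hDM
  have a2 : |(D' : ℚ)| < (n.factorial : ℚ) * (M : ℚ) ^ (n ^ 2) := by exact_mod_cast hDM'
  have h2 : |(D : ℚ)| * |(D' : ℚ)| < (n.factorial : ℚ) ^ 2 * (M : ℚ) ^ (2 * n ^ 2) := by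
    calc _ < ((n.factorial : ℚ) * (M : ℚ) ^ (n ^ 2)) * ((n.factorial : ℚ) * (M : ℚ) ^ (n ^ 2)) :=
          mul_lt_mul'' a1 a2 (abs_nonneg _) (abs_nonneg _)
      _ = _ := by rw [two_mul, pow_add]; ring
  have h0 : 0 < (n.factorial : ℚ) ^ 2 * (M : ℚ) ^ (2 * n ^ 2) :=
    lt_of_le_of_lt (by positivity) h2
  rw [gt_iff_lt, div_lt_iff₀ h0, mul_comm]
  exact lt_of_le_of_lt h1 (mul_lt_mul_of_pos_right h2 hpos)
end
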